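/- Fix T > 0, ε > 0, and K > 0. Let w = (w₁,w₂,w₃) : [0,T] × ℝ² × (−∞,0] → ℝ³ be a smooth vector field, bounded together with all its partial derivatives, satisfying w₃(t,y,0) = 0 for all t, y. Let ρ, 𝓗 : [0,T] × ℝ² × (−∞,0] → ℝ be smooth, vanishing for z ≤ −K, such that for every t all the quantities below are finite, and suppose that ρ solves ∂_tρ + w·∇ρ = ε ∂_zzρ + 𝓗 on (0,T) × S with ρ(t,y,0) = 0. Then there is a constant C, independent of ε, T, w, ρ, 𝓗, such that for i = 1,2,3 and all t ∈ [0,T]: ‖Z_i ρ(t)‖_{L^∞(S)} ≤ C ( ‖Z_i ρ(0)‖_{L^∞} + ‖ρ(0)‖_{L^∞} + ∫_0^t [ ( ‖w(s)‖_{E^{2,∞}} + ‖∂_zz w₃(s)‖_{L^∞} ) ( ‖ρ(s)‖_{1,∞} + ‖ρ(s)‖_4 ) + ‖𝓗(s)‖_{1,∞} ] ds ). -/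

import Mathlib

open MeasureTheory
open scoped ENNReal

/-- The lower half-space `S = ℝ² × (−∞, 0)`, with points `x = (y, z)`. -/
def lowerHalf : Set ((Fin 2 → ℝ) × ℝ) := {x | x.2 < 0}

/-- The normal derivative `∂_z g`. -/
noncomputable def dzD (g : ((Fin 2 → ℝ) × ℝ) → ℝ) (x : (Fin 2 → ℝ) × ℝ) : ℝ :=
  fderiv ℝ g x ((0 : Fin 2 → ℝ), (1 : ℝ))

/-- The conormal vector fields: `Z₁ = ∂_{y₁}`, `Z₂ = ∂_{y₂}`, `Z₃ = (z/(1−z)) ∂_z`. -/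
noncomputable def Zop (i : Fin 3) (g : ((Fin 2 → ℝ) × ℝ) → ℝ) :
    ((Fin 2 → ℝ) × ℝ) → ℝ :=
  if i = 0 then fun x => fderiv ℝ g x (Pi.single 0 1, (0 : ℝ))
  else if i = 1 then fun x => fderiv ℝ g x (Pi.single 1 1, (0 : ℝ))
  else fun x => x.2 / (1 - x.2) * dzD g x

/-- Iterated conormal derivative `Z^α = Z₁^{α₁} Z₂^{α₂} Z₃^{α₃}`. -/
noncomputable def Zpow (α : Fin 3 → ℕ) (g : ((Fin 2 → ℝ) × ℝ) → ℝ) :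
    ((Fin 2 → ℝ) × ℝ) → ℝ :=
  (Zop 0)^[α 0] ((Zop 1)^[α 1] ((Zop 2)^[α 2] g))

/-- The multi-indices `α` with `|α| ≤ k`. -/
def multiIdx (k : ℕ) : Finset (Fin 3 → ℕ) :=
  (Finset.Icc (0 : Fin 3 → ℕ) fun _ => k).filter fun α => α 0 + α 1 + α 2 ≤ k

/-- The `L^∞(S)` norm (as an extended nonnegative real). -/
noncomputable def supNormS (g : ((Fin 2 → ℝ) × ℝ) → ℝ) : ℝ≥0∞ :=
  ⨆ x ∈ lowerHalf, (‖g x‖₊ : ℝ≥0∞)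

/-- The conormal norm `‖g‖_{k,∞} = Σ_{|α| ≤ k} ‖Z^α g‖_{L^∞(S)}`. -/
noncomputable def conormInf (k : ℕ) (g : ((Fin 2 → ℝ) × ℝ) → ℝ) : ℝ≥0∞ :=
  ∑ α ∈ multiIdx k, supNormS (Zpow α g)

/-- The conormal Sobolev norm `‖g‖_m = (Σ_{|α| ≤ m} ‖Z^α g‖²_{L²(S)})^{1/2}`. -/
noncomputable def conormL2 (k : ℕ) (g : ((Fin 2 → ℝ) × ℝ) → ℝ) : ℝ≥0∞ :=
  (∑ α ∈ multiIdx k, ∫⁻ x in lowerHalf, (‖Zpow α g x‖₊ : ℝ≥0∞) ^ 2) ^ ((1 : ℝ) / 2)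

/-- `‖w(s)‖_{E^{2,∞}} = ‖w(s)‖_{2,∞} + ‖∂_z w(s)‖_{1,∞}` (summed over the components). -/
noncomputable def wE2inf (w : ℝ → ((Fin 2 → ℝ) × ℝ) → Fin 3 → ℝ) (s : ℝ) : ℝ≥0∞ :=
  (∑ i : Fin 3, conormInf 2 (fun x => w s x i))
    + ∑ i : Fin 3, conormInf 1 (dzD (fun x => w s x i))


abbrev EE := ℝ × ((Fin 2 → ℝ) × ℝ)

noncomputable def Dd (v : EE) (f : EE → ℝ) : EE → ℝ := fun X => fderiv ℝ f X v

lemma Dd_smooth {f : EE → ℝ} (hf : ContDiff ℝ (⊤ : ℕ∞) f) (v : EE) :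
    ContDiff ℝ (⊤ : ℕ∞) (Dd v f) := by
  unfold Dd
  exact (hf.fderiv_right (m := (⊤ : ℕ∞)) (by simp)).clm_apply contDiff_const

lemma Dd_comm {f : EE → ℝ} (hf : ContDiff ℝ (⊤ : ℕ∞) f) (u v : EE) :
    Dd u (Dd v f) = Dd v (Dd u f) := by
  funext X
  have h1 : ∀ a b : EE, Dd a (Dd b f) X = fderiv ℝ (fderiv ℝ f) X a b := by
    intro a b
    have hd : DifferentiableAt ℝ (fderiv ℝ f) X :=
      (hf.fderiv_right (m := (⊤ : ℕ∞)) (by simp)).differentiable (by simp) X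
    unfold Dd
    rw [fderiv_clm_apply hd (differentiableAt_const b)]
    simp
  rw [h1, h1]
  have := (hf.contDiffAt (x := X)).isSymmSndFDerivAt (by simp only [minSmoothness_of_isRCLikeNormedField]; exact WithTop.coe_le_coe.2 (le_top : (2:ℕ∞) ≤ ⊤))
  exact this u v

lemma hasDerivAt_slice {f : EE → ℝ} (hf : ContDiff ℝ (⊤ : ℕ∞) f) (X v : EE) (h : ℝ) :
    HasDerivAt (fun h : ℝ => f (X + h • v)) (Dd v f (X + h • v)) h := by
  have h1 : HasFDerivAt f (fderiv ℝ f (X + h • v)) (X + h • v) :=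
    (hf.differentiable (by simp) _).hasFDerivAt
  have h2 : HasDerivAt (fun h : ℝ => X + h • v) v h := by
    simpa using ((hasDerivAt_id h).smul_const v).const_add X
  exact h1.comp_hasDerivAt h h2

lemma second_test {f f1 : ℝ → ℝ} {f2 : ℝ} (hmax : ∀ᶠ h in nhds (0 : ℝ), f h ≤ f 0)
    (h1 : ∀ᶠ h in nhds (0 : ℝ), HasDerivAt f (f1 h) h) (h2 : HasDerivAt f1 f2 0) :
    f1 0 = 0 ∧ f2 ≤ 0 := by
  have hm : IsLocalMax f 0 := hmax
  have e1 : f1 0 = 0 := hm.hasDerivAt_eq_zero h1.self_of_nhds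
  refine ⟨e1, ?_⟩
  by_contra hc
  push Not at hc
  have hd : deriv f =ᶠ[nhds 0] f1 := by
    filter_upwards [h1] with h hh using hh.deriv
  have hdd : deriv (deriv f) 0 = f2 := by
    rw [hd.deriv_eq]; exact h2.deriv
  have hmin := isLocalMin_of_deriv_deriv_pos (f := f) (x₀ := 0) (by rw [hdd]; exact hc)
    (by rw [hd.self_of_nhds]; exact e1) h1.self_of_nhds.continuousAt
  have hconst : f =ᶠ[nhds 0] fun _ => f 0 := by
    filter_upwards [hmin, hm] with h a b using le_antisymm b a
  have : deriv (deriv f) 0 = 0 := by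
    have := hconst.deriv
    rw [this.deriv_eq]; simp
  rw [hdd] at this
  linarith

lemma time_test {f : ℝ → ℝ} {f' t : ℝ} (ht : 0 < t) (hmax : ∀ h ∈ Set.Icc (-t) 0, f h ≤ f 0)
    (h1 : HasDerivAt f f' 0) : 0 ≤ f' := by
  have h2 : HasDerivWithinAt f f' (Set.Iio 0) 0 := h1.hasDerivWithinAt
  have h3 := (hasDerivWithinAt_iff_tendsto_slope' (by simp)).1 h2
  refine ge_of_tendsto h3 ?_
  have : Set.Ioo (-t) 0 ∈ nhdsWithin (0 : ℝ) (Set.Iio 0) := Ioo_mem_nhdsLT (by linarith)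
  filter_upwards [this] with s hs
  rw [slope_def_field]
  have := hmax s ⟨hs.1.le, hs.2.le⟩
  apply div_nonneg_of_nonpos <;> linarith [hs.2]

set_option maxHeartbeats 2000000 in
lemma alg_contra (p c c1 c2 q qs q1 q2 qz qzz r rs r1 r2 rz rzz w1 w2 w3 v1 v2 v3 H Hv
    b bs b1 b2 g δ κ ε : ℝ) (hε : 0 < ε) (hδ : 0 < δ) (hκ : 1 ≤ κ) (hb : 0 < b)
    (hp : p = c * q)
    (hs : 0 ≤ 2 * p * (c * qs) + 12 * r * rs - κ * (2 * b * bs))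
    (h1 : 2 * p * (c * q1) + 12 * r * r1 = κ * (2 * b * b1))
    (h2 : 2 * p * (c * q2) + 12 * r * r2 = κ * (2 * b * b2))
    (hz : 2 * p * (c1 * q + c * qz) + 12 * r * rz = 0)
    (hzz : 2 * (c1 * q + c * qz) ^ 2 + 2 * p * (c2 * q + 2 * c1 * qz + c * qzz)
      + 12 * rz ^ 2 + 12 * r * rzz ≤ 0)
    (eq : rs + (w1 * r1 + w2 * r2 + w3 * rz) = ε * rzz + H)
    (eqv : qs + (w1 * q1 + w2 * q2 + w3 * qz) + (v1 * r1 + v2 * r2 + v3 * rz) = ε * qzz + Hv)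
    (hbs : g + δ ≤ bs + w1 * b1 + w2 * b2)
    (hF : p ^ 2 + 6 * r ^ 2 = κ * b ^ 2)
    (hG : |c * (Hv - v1 * r1 - v2 * r2 - v3 * rz) + w3 * c1 * q| + 3 * |H| ≤ g)
    (hc : 0 ≤ (c * c2 - 3 * c1 ^ 2) * q ^ 2 + 6 * rz ^ 2) : False := by
  set g1 := c * (Hv - v1 * r1 - v2 * r2 - v3 * rz) + w3 * c1 * q with hg1
  -- L F
  have hL : κ * (2 * b * (g + δ)) ≤ 2 * p * g1 + 12 * r * H := by
    have e1 : κ * (2 * b * (g + δ)) ≤ κ * (2 * b * (bs + w1 * b1 + w2 * b2)) := by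
      gcongr
    have e2 : 0 ≤ ε * (2 * ((c * c2 - 3 * c1 ^ 2) * q ^ 2 + 6 * rz ^ 2)
        + 2 * (c * qz + 2 * c1 * q) ^ 2) := by positivity
    have e3 : ε * (2 * (c1 * q + c * qz) ^ 2 + 2 * p * (c2 * q + 2 * c1 * qz + c * qzz)
      + 12 * rz ^ 2 + 12 * r * rzz) ≤ 0 := mul_nonpos_of_nonneg_of_nonpos hε.le hzz
    have hrs : rs = ε * rzz + H - (w1 * r1 + w2 * r2 + w3 * rz) := by linarith
    have hqs : qs = ε * qzz + Hv - (w1 * q1 + w2 * q2 + w3 * qz)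
      - (v1 * r1 + v2 * r2 + v3 * rz) := by linarith
    have k1 : κ * (2 * b * (bs + w1 * b1 + w2 * b2)) = κ * (2 * b * bs)
      + w1 * (2 * p * (c * q1) + 12 * r * r1) + w2 * (2 * p * (c * q2) + 12 * r * r2) := by
      rw [h1, h2]; ring
    have k3 : w3 * (2 * p * (c1 * q + c * qz) + 12 * r * rz) = 0 := by rw [hz]; ring
    rw [hrs, hqs] at hs
    subst hp
    rw [hg1]
    linear_combination e1 + e2 + e3 + k1 - k3 + hs
  clear_value g1
  clear hs h1 h2 hz hzz eq eqv hbs hc hp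
  set S := Real.sqrt κ with hS
  have hS1 : 1 ≤ S := by rw [hS]; exact Real.one_le_sqrt.2 hκ
  have hSS : S ^ 2 = κ := Real.sq_sqrt (by linarith)
  have hpS : |p| ≤ S * b := abs_le_of_sq_le_sq (by rw [mul_pow, hSS]; nlinarith [sq_nonneg r]) (by positivity)
  have hrS : |2 * r| ≤ S * b :=
    abs_le_of_sq_le_sq (by rw [mul_pow, mul_pow, hSS]; nlinarith [sq_nonneg r, sq_nonneg p]) (by positivity)
  have a1 : 2 * p * g1 ≤ 2 * (S * b) * |g1| := by
    calc 2 * p * g1 ≤ |2 * p * g1| := le_abs_self _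
      _ = 2 * |p| * |g1| := by rw [abs_mul, abs_mul]; simp
      _ ≤ _ := by gcongr
  have a2 : 12 * r * H ≤ 6 * (S * b) * |H| := by
    calc 12 * r * H ≤ |6 * (2 * r) * H| := by
          refine le_trans (le_of_eq ?_) (le_abs_self _); ring
      _ = 6 * |2 * r| * |H| := by rw [abs_mul, abs_mul]; simp
      _ ≤ _ := by gcongr
  have a3 : 2 * (S * b) * (|g1| + 3 * |H|) ≤ 2 * (S * b) * g := by gcongr
  have hg0 : 0 ≤ g := le_trans (by positivity) hG
  have a4 : 2 * (S * b) * g ≤ 2 * (κ * b) * g := by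
    have : S ≤ κ := by rw [← hSS]; nlinarith
    gcongr
  have a5 : 0 < κ * b * δ := by positivity
  linarith

noncomputable def eT : EE := (1, (0, 0))
noncomputable def e1 : EE := (0, (Pi.single 0 1, 0))
noncomputable def e2 : EE := (0, (Pi.single 1 1, 0))
noncomputable def eZ : EE := (0, (0, 1))

/-- differentiated equation -/
lemma eq_diff {r H w1 w2 w3 : EE → ℝ} {ε T : ℝ}
    (hr : ContDiff ℝ (⊤ : ℕ∞) r) (hH : ContDiff ℝ (⊤ : ℕ∞) H)
    (hw1 : ContDiff ℝ (⊤ : ℕ∞) w1) (hw2 : ContDiff ℝ (⊤ : ℕ∞) w2) (hw3 : ContDiff ℝ (⊤ : ℕ∞) w3)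
    (heq : ∀ X : EE, X.1 ∈ Set.Ioo 0 T → X.2.2 < 0 →
      Dd eT r X + (w1 X * Dd e1 r X + w2 X * Dd e2 r X + w3 X * Dd eZ r X)
        = ε * Dd eZ (Dd eZ r) X + H X) (v X : EE) (h1 : X.1 ∈ Set.Ioo 0 T) (h2 : X.2.2 < 0) :
    Dd eT (Dd v r) X + (w1 X * Dd e1 (Dd v r) X + w2 X * Dd e2 (Dd v r) X
        + w3 X * Dd eZ (Dd v r) X)
      + (Dd v w1 X * Dd e1 r X + Dd v w2 X * Dd e2 r X + Dd v w3 X * Dd eZ r X)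
      = ε * Dd eZ (Dd eZ (Dd v r)) X + Dd v H X := by
  have hev : (fun X => Dd eT r X + (w1 X * Dd e1 r X + w2 X * Dd e2 r X + w3 X * Dd eZ r X))
      =ᶠ[nhds X] fun X => ε * Dd eZ (Dd eZ r) X + H X := by
    have o1 : ∀ᶠ Y : EE in nhds X, Y.1 ∈ Set.Ioo 0 T :=
      continuous_fst.continuousAt.eventually (isOpen_Ioo.mem_nhds h1)
    have o2 : ∀ᶠ Y : EE in nhds X, Y.2.2 < 0 :=
      (isOpen_lt (by fun_prop : Continuous fun Y : EE => Y.2.2) continuous_const).mem_nhds h2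
    filter_upwards [o1, o2] with Y a b using heq Y a b
  have hd : ∀ {f : EE → ℝ}, ContDiff ℝ (⊤ : ℕ∞) f →
      HasDerivAt (fun h : ℝ => f (X + h • v)) (Dd v f X) 0 := by
    intro f hf
    simpa using hasDerivAt_slice hf X v 0
  have hl : HasDerivAt (fun h : ℝ => Dd eT r (X + h • v) + (w1 (X + h • v) * Dd e1 r (X + h • v)
      + w2 (X + h • v) * Dd e2 r (X + h • v) + w3 (X + h • v) * Dd eZ r (X + h • v))) _ 0 :=
    (hd (Dd_smooth hr eT)).add ((((hd hw1).mul (hd (Dd_smooth hr e1))).add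
      ((hd hw2).mul (hd (Dd_smooth hr e2)))).add ((hd hw3).mul (hd (Dd_smooth hr eZ))))
  have hrr : HasDerivAt (fun h : ℝ => ε * Dd eZ (Dd eZ r) (X + h • v) + H (X + h • v)) _ 0 :=
    ((hd (Dd_smooth (Dd_smooth hr eZ) eZ)).const_mul ε).add (hd hH)
  have hcont : Filter.Tendsto (fun h : ℝ => X + h • v) (nhds 0) (nhds X) := by
    have : ContinuousAt (fun h : ℝ => X + h • v) 0 := by fun_prop
    simpa [ContinuousAt] using this
  have := (hl.congr_of_eventuallyEq (Filter.EventuallyEq.symm (hcont.eventually hev))).unique hrr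
  simp only [zero_smul, add_zero] at this
  rw [Dd_comm hr eT v, Dd_comm hr e1 v, Dd_comm hr e2 v, Dd_comm hr eZ v,
    Dd_comm (Dd_smooth hr eZ) eZ v]
  linarith

lemma barrier_ineq {B w1 w2 d1 d2 : ℝ} (hB0 : 0 ≤ B) (h1 : |w1| ≤ B) (h2 : |w2| ≤ B) :
    0 ≤ (1 + d1 ^ 2 + d2 ^ 2) * (2 * B) + w1 * (2 * d1) + w2 * (2 * d2) := by
  have i1 : ∀ w d : ℝ, |w| ≤ B → 0 ≤ B * (1 + d ^ 2) + w * (2 * d) := by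
    intro w d hw
    have := abs_le.1 hw
    nlinarith [mul_nonneg (by linarith : 0 ≤ B - w) (sq_nonneg (1 - d)),
      mul_nonneg (by linarith : 0 ≤ B + w) (sq_nonneg (1 + d))]
  have := i1 _ d1 h1
  have := i1 _ d2 h2
  nlinarith [mul_nonneg hB0 (sq_nonneg d1), mul_nonneg hB0 (sq_nonneg d2)]

set_option maxHeartbeats 4000000 in
theorem core {r H w1 w2 w3 : EE → ℝ} {ε T B m K' t0 : ℝ} {v : EE} {c c1 c2 : ℝ → ℝ}
    {x0 : (Fin 2 → ℝ) × ℝ} (hε : 0 < ε) (hB0 : 0 ≤ B) (hm : 0 ≤ m)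
    (hr : ContDiff ℝ (⊤ : ℕ∞) r) (hH : ContDiff ℝ (⊤ : ℕ∞) H)
    (hw1 : ContDiff ℝ (⊤ : ℕ∞) w1) (hw2 : ContDiff ℝ (⊤ : ℕ∞) w2) (hw3 : ContDiff ℝ (⊤ : ℕ∞) w3)
    (heq : ∀ X : EE, X.1 ∈ Set.Ioo 0 T → X.2.2 < 0 →
      Dd eT r X + (w1 X * Dd e1 r X + w2 X * Dd e2 r X + w3 X * Dd eZ r X)
        = ε * Dd eZ (Dd eZ r) X + H X)
    (hcont : ContinuousOn c (Set.Iic 0))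
    (hc1 : ∀ z < 0, HasDerivAt c (c1 z) z) (hc2 : ∀ z < 0, HasDerivAt c1 (c2 z) z)
    (hB : ∀ X : EE, X.1 ∈ Set.Icc 0 T → X.2.2 ≤ 0 → |w1 X| ≤ B ∧ |w2 X| ≤ B)
    (htop : ∀ s ∈ Set.Icc 0 T, ∀ y, r (s, (y, 0)) = 0 ∧ c 0 * Dd v r (s, (y, 0)) = 0)
    (hbot : ∀ s ∈ Set.Icc 0 T, ∀ y, r (s, (y, -K')) = 0 ∧ Dd v r (s, (y, -K')) = 0)
    (hinit : ∀ x : (Fin 2 → ℝ) × ℝ, x.2 < 0 →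
      (c x.2 * Dd v r (0, x)) ^ 2 + 6 * r (0, x) ^ 2 ≤ m ^ 2)
    (hcc : ∀ X : EE, X.2.2 < 0 → 0 ≤ (c X.2.2 * c2 X.2.2 - 3 * c1 X.2.2 ^ 2) * Dd v r X ^ 2
      + 6 * Dd eZ r X ^ 2)
    (ht0 : t0 ∈ Set.Ioo 0 T) (hx0 : x0.2 < 0) (hx0' : -K' ≤ x0.2) :
    ∃ R : ℝ, 0 ≤ R ∧ ∀ g : ℝ → ℝ, Continuous g → (∀ s, 0 ≤ g s) →
      (∀ s ∈ Set.Icc 0 t0, ∀ x : (Fin 2 → ℝ) × ℝ, x.1 ∈ Metric.closedBall x0.1 R →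
        -K' ≤ x.2 → x.2 < 0 →
        |c x.2 * (Dd v H (s, x) - Dd v w1 (s, x) * Dd e1 r (s, x)
          - Dd v w2 (s, x) * Dd e2 r (s, x) - Dd v w3 (s, x) * Dd eZ r (s, x))
          + w3 (s, x) * c1 x.2 * Dd v r (s, x)| + 3 * |H (s, x)| ≤ g s) →
      ∀ δ > 0, |c x0.2 * Dd v r (t0, x0)| ≤ m + (∫ s in (0 : ℝ)..t0, g s) + δ * (1 + t0) + δ := by
  set k0 : ℝ := 2 * Real.exp (2 * B * t0) with hk0
  have hk2 : 2 ≤ k0 := by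
    have : 1 ≤ Real.exp (2 * B * t0) := Real.one_le_exp (by have := ht0.1; positivity)
    linarith
  have hk0p : 0 < k0 := by linarith
  refine ⟨2 * k0, by linarith, ?_⟩
  intro g hg hg0 hG δ hδ
  set R := 2 * k0 with hR
  set η := x0.1 with hη
  let F : EE → ℝ := fun X => (c X.2.2 * Dd v r X) ^ 2 + 6 * r X ^ 2
  let Q : Set EE := Set.Icc 0 t0 ×ˢ (Metric.closedBall η R ×ˢ Set.Icc (-K') 0)
  have hQc : IsCompact Q := isCompact_Icc.prod ((isCompact_closedBall η R).prod isCompact_Icc)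
  have hFc : ContinuousOn F Q := by
    have h1 : ContinuousOn (fun X : EE => c X.2.2) Q :=
      hcont.comp (by fun_prop) (fun X hX => hX.2.2.2)
    have h2 : ContinuousOn (Dd v r) Q := (Dd_smooth hr v).continuous.continuousOn
    have h3 : ContinuousOn r Q := hr.continuous.continuousOn
    exact ((h1.mul h2).pow 2).add ((h3.pow 2).const_mul 6 |>.congr fun X _ => rfl)
  obtain ⟨N, hN⟩ := hQc.exists_bound_of_continuousOn hFc
  obtain ⟨k, hk⟩ := pow_unbounded_of_one_lt (max N (1 / δ)) (one_lt_two (α := ℝ))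
  have hkN : N < 2 ^ k := lt_of_le_of_lt (le_max_left _ _) hk
  have hkδ : 1 / δ < 2 ^ k := lt_of_le_of_lt (le_max_right _ _) hk
  let Y : EE → ℝ := fun X =>
    (1 + (X.2.1 0 - η 0) ^ 2 + (X.2.1 1 - η 1) ^ 2) * Real.exp (2 * B * X.1) / k0
  have hYp : ∀ X, 0 < Y X := fun X => by positivity
  let a : ℝ → ℝ := fun s => m + δ + ∫ u in (0 : ℝ)..s, (g u + δ)
  have ha : ∀ s, HasDerivAt a (g s + δ) s := by
    intro s
    have : Continuous fun u => g u + δ := by fun_prop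
    exact ((this.integral_hasStrictDerivAt 0 s).hasDerivAt).const_add (m + δ)
  have hapos : ∀ s, 0 ≤ s → m + δ ≤ a s := by
    intro s hs
    have : 0 ≤ ∫ u in (0 : ℝ)..s, (g u + δ) :=
      intervalIntegral.integral_nonneg hs (fun u _ => by linarith [hg0 u])
    simp only [a]; linarith
  let b : EE → ℝ := fun X => a X.1 + Y X ^ k
  have hbpos : ∀ X : EE, 0 ≤ X.1 → m + δ < b X := by
    intro X hX
    have := hapos X.1 hX
    have := pow_pos (hYp X) k
    simp only [b]; linarith
  have hbc : Continuous b := by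
    have : Continuous a := continuous_iff_continuousAt.2 fun s => (ha s).continuousAt
    simp only [b, Y]
    fun_prop
  let Φ : EE → ℝ := fun X => F X / b X ^ 2
  have hX0Q : ((t0, x0) : EE) ∈ Q :=
    ⟨⟨ht0.1.le, le_rfl⟩, Metric.mem_closedBall_self (by linarith), hx0', hx0.le⟩
  have hΦc : ContinuousOn Φ Q := by
    refine hFc.div (by fun_prop) ?_
    intro X hX
    have := hbpos X hX.1.1
    have : 0 < b X := by linarith
    positivity
  obtain ⟨X1, hX1, hmax⟩ := hQc.exists_isMaxOn ⟨_, hX0Q⟩ hΦc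
  have key : Φ X1 < 1 := by
    by_contra hcon
    push Not at hcon
    set κ := Φ X1 with hκ
    have hb1 : 0 < b X1 := by have := hbpos X1 hX1.1.1; linarith
    have hFX1 : F X1 = κ * b X1 ^ 2 := by
      rw [hκ]; simp only [Φ]; field_simp
    have hFle : ∀ X ∈ Q, F X - κ * b X ^ 2 ≤ F X1 - κ * b X1 ^ 2 := by
      intro X hX
      have h1 : Φ X ≤ κ := hmax hX
      have h2 : 0 < b X := by have := hbpos X hX.1.1; linarith
      have : F X ≤ κ * b X ^ 2 := by
        simp only [Φ] at h1
        rwa [div_le_iff₀ (by positivity)] at h1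
      rw [hFX1]; linarith
    have hFpos : b X1 ^ 2 ≤ F X1 := by
      rw [hFX1]; nlinarith [sq_nonneg (b X1)]
    have hFpos' : 0 < F X1 := lt_of_lt_of_le (by positivity) hFpos
    obtain ⟨s1, y1, z1⟩ := X1
    obtain ⟨⟨hs0, hst⟩, hy1, hz0, hz1⟩ := hX1
    simp only at hs0 hst hy1 hz0 hz1
    have hsT : s1 ∈ Set.Icc 0 T := ⟨hs0, by linarith [ht0.2]⟩
    have hz1' : z1 < 0 := by
      rcases hz1.lt_or_eq with h | h
      · exact h
      · exfalso
        subst h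
        have := htop s1 hsT y1
        simp [F, this.1, this.2] at hFpos'
    have hz0' : -K' < z1 := by
      rcases hz0.lt_or_eq with h | h
      · exact h
      · exfalso
        subst h
        have := hbot s1 hsT y1
        simp [F, this.1, this.2] at hFpos'
    have hs0' : 0 < s1 := by
      rcases hs0.lt_or_eq with h | h
      · exact h
      · exfalso
        subst h
        have h1 := hinit (y1, z1) hz1'
        have h2 := hbpos (0, (y1, z1)) le_rfl
        have h3 : m ^ 2 < b (0, (y1, z1)) ^ 2 := by
          apply pow_lt_pow_left₀ _ hm (by norm_num); linarith
        simp only [F] at hFpos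
        simp only at h1
        linarith
    have hlat : ∀ j : Fin 2, |y1 j - η j| ≤ R := by
      intro j
      have := (dist_pi_le_iff (by linarith)).1 (Metric.mem_closedBall.1 hy1) j
      rwa [Real.dist_eq] at this
    have hYlt : Y (s1, (y1, z1)) < 2 := by
      by_contra hY
      push Not at hY
      have h1 : (2:ℝ) ^ k ≤ Y (s1, (y1, z1)) ^ k := pow_le_pow_left₀ (by norm_num) hY k
      have h2 : (2:ℝ) ^ k < b (s1, (y1, z1)) := by
        have := hapos s1 hs0
        simp only [b]; linarith
      have h3 : F (s1, (y1, z1)) ≤ N := le_trans (le_abs_self _)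
        (hN (s1, (y1, z1)) ⟨⟨hs0, hst⟩, hy1, hz0, hz1⟩)
      have h4 : (1:ℝ) ≤ 2 ^ k := one_le_pow₀ (by norm_num)
      nlinarith
    have hlat' : ∀ j : Fin 2, |y1 j - η j| < R := by
      intro j
      refine lt_of_le_of_ne (hlat j) ?_
      intro hj
      have hsq : R ^ 2 = (y1 j - η j) ^ 2 := by rw [← hj, sq_abs]
      have h1 : R ^ 2 ≤ (y1 0 - η 0) ^ 2 + (y1 1 - η 1) ^ 2 := by
        rw [hsq]
        fin_cases j
        · simp; positivity
        · simp; positivity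
      have h2 : 1 ≤ Real.exp (2 * B * s1) := Real.one_le_exp (by positivity)
      have h3 : 2 * k0 ≤ R ^ 2 := by rw [hR]; nlinarith
      simp only [Y] at hYlt
      rw [div_lt_iff₀ hk0p] at hYlt
      nlinarith [sq_nonneg (y1 0 - η 0), sq_nonneg (y1 1 - η 1)]
    set X1 : EE := (s1, (y1, z1)) with hX1
    -- slices
    have hd : ∀ {f : EE → ℝ} (u : EE), ContDiff ℝ (⊤ : ℕ∞) f →
        HasDerivAt (fun h : ℝ => f (X1 + h • u)) (Dd u f X1) 0 := by
      intro f u hf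
      simpa using hasDerivAt_slice hf X1 u 0
    have hq := Dd_smooth hr v
    -- horizontal directions
    have hFh : ∀ u : EE, u.2.2 = 0 → HasDerivAt (fun h : ℝ => F (X1 + h • u))
        (2 * (c z1 * Dd v r X1) * (c z1 * Dd u (Dd v r) X1) + 12 * r X1 * Dd u r X1) 0 := by
      intro u hu
      have e : (fun h : ℝ => F (X1 + h • u)) = fun h : ℝ =>
          (c z1 * Dd v r (X1 + h • u)) ^ 2 + 6 * r (X1 + h • u) ^ 2 := by
        funext h
        have : (X1 + h • u).2.2 = z1 := by simp [hu, hX1]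
        simp only [F, this]
      rw [e]
      have := (((hd u hq).const_mul (c z1)).pow 2).add (((hd u hr).pow 2).const_mul 6)
      refine this.congr_deriv ?_
      simp; ring
    have hYd1 : HasDerivAt (fun h : ℝ => Y (X1 + h • e1))
        (2 * (y1 0 - η 0) * Real.exp (2 * B * s1) / k0) 0 := by
      have e : (fun h : ℝ => Y (X1 + h • e1)) = fun h : ℝ =>
        (1 + (y1 0 + h - η 0) ^ 2 + (y1 1 - η 1) ^ 2) * Real.exp (2 * B * s1) / k0 := by
        funext h; simp [Y, e1, hX1]
      rw [e]
      have := (((((((hasDerivAt_id (0:ℝ)).const_add (y1 0)).sub_const (η 0)).pow 2).const_add 1).add_const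
        ((y1 1 - η 1) ^ 2)).mul_const (Real.exp (2 * B * s1))).div_const k0
      refine this.congr_deriv ?_
      simp
    have hYd2 : HasDerivAt (fun h : ℝ => Y (X1 + h • e2))
        (2 * (y1 1 - η 1) * Real.exp (2 * B * s1) / k0) 0 := by
      have e : (fun h : ℝ => Y (X1 + h • e2)) = fun h : ℝ =>
        (1 + (y1 0 - η 0) ^ 2 + (y1 1 + h - η 1) ^ 2) * Real.exp (2 * B * s1) / k0 := by
        funext h; simp [Y, e2, hX1]
      rw [e]
      have := ((((((hasDerivAt_id (0:ℝ)).const_add (y1 1)).sub_const (η 1)).pow 2).const_add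
        (1 + (y1 0 - η 0) ^ 2)).mul_const (Real.exp (2 * B * s1))).div_const k0
      refine this.congr_deriv ?_
      simp
    have hYdT : HasDerivAt (fun h : ℝ => Y (X1 + h • eT))
        ((1 + (y1 0 - η 0) ^ 2 + (y1 1 - η 1) ^ 2) * (2 * B * Real.exp (2 * B * s1)) / k0) 0 := by
      have e : (fun h : ℝ => Y (X1 + h • eT)) = fun h : ℝ =>
        (1 + (y1 0 - η 0) ^ 2 + (y1 1 - η 1) ^ 2) * Real.exp (2 * B * (s1 + h)) / k0 := by
        funext h; simp [Y, eT, hX1]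
      rw [e]
      have := (((((hasDerivAt_id (0:ℝ)).const_add s1).const_mul (2 * B)).exp).const_mul
        (1 + (y1 0 - η 0) ^ 2 + (y1 1 - η 1) ^ 2)).div_const k0
      refine this.congr_deriv ?_
      simp; ring
    set kp : ℝ := k * Y X1 ^ (k - 1) with hkp
    have hkp0 : 0 ≤ kp := by have := hYp X1; positivity
    have hbd : ∀ u : EE, u.1 = 0 → ∀ d, HasDerivAt (fun h : ℝ => Y (X1 + h • u)) d 0 →
        HasDerivAt (fun h : ℝ => b (X1 + h • u)) (kp * d) 0 := by
      intro u hu d hdd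
      have e : (fun h : ℝ => b (X1 + h • u)) = fun h : ℝ => a s1 + Y (X1 + h • u) ^ k := by
        funext h; simp [b, hu, hX1]
      rw [e]
      refine ((hdd.pow k).const_add (a s1)).congr_deriv ?_
      simp [hkp]
    have hbdT : HasDerivAt (fun h : ℝ => b (X1 + h • eT)) (g s1 + δ + kp *
        ((1 + (y1 0 - η 0) ^ 2 + (y1 1 - η 1) ^ 2) * (2 * B * Real.exp (2 * B * s1)) / k0)) 0 := by
      have e : (fun h : ℝ => b (X1 + h • eT)) = fun h : ℝ => a (s1 + h) + Y (X1 + h • eT) ^ k := by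
        funext h; simp [b, eT, hX1]
      rw [e]
      have h1 : HasDerivAt (fun h => a (s1 + h)) (g s1 + δ) 0 := by
        apply HasDerivAt.comp_const_add s1 0
        simpa using ha s1
      refine (h1.add (hYdT.pow k)).congr_deriv ?_
      simp [hkp]
    -- combined function
    have hW : ∀ u : EE, ∀ d d', HasDerivAt (fun h : ℝ => F (X1 + h • u)) d 0 →
        HasDerivAt (fun h : ℝ => b (X1 + h • u)) d' 0 →
        HasDerivAt (fun h : ℝ => F (X1 + h • u) - κ * b (X1 + h • u) ^ 2)
          (d - κ * (2 * b X1 * d')) 0 := by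
      intro u d d' h1 h2
      refine (h1.sub ((h2.pow 2).const_mul κ)).congr_deriv ?_
      simp
    have hT : 0 ≤ 2 * (c z1 * Dd v r X1) * (c z1 * Dd eT (Dd v r) X1) + 12 * r X1 * Dd eT r X1
        - κ * (2 * b X1 * (g s1 + δ + kp *
        ((1 + (y1 0 - η 0) ^ 2 + (y1 1 - η 1) ^ 2) * (2 * B * Real.exp (2 * B * s1)) / k0))) := by
      refine time_test hs0' ?_ (hW eT _ _ (hFh eT (by simp [eT])) hbdT)
      intro h hh
      simp only [zero_smul, add_zero]
      apply hFle
      simp only [hX1, eT]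
      refine ⟨⟨?_, ?_⟩, ?_, ?_, ?_⟩ <;> simp <;> first | linarith [hh.1, hh.2] | exact hy1
    have hyloc : ∀ (u : EE) (j : Fin 2), u.1 = 0 → u.2.2 = 0 → u.2.1 = Pi.single j 1 →
        IsLocalMax (fun h : ℝ => F (X1 + h • u) - κ * b (X1 + h • u) ^ 2) 0 := by
      intro u j hu1 hu2 hu3
      have hp : 0 < R - |y1 j - η j| := by linarith [hlat' j]
      have : Set.Ioo (-(R - |y1 j - η j|)) (R - |y1 j - η j|) ∈ nhds (0:ℝ) :=
        Ioo_mem_nhds (by linarith) hp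
      filter_upwards [this] with h hh
      simp only [zero_smul, add_zero]
      apply hFle
      refine ⟨?_, ?_, ?_⟩
      · simp [hX1, hu1, hs0, hst]
      · rw [Metric.mem_closedBall, dist_pi_le_iff (by linarith)]
        intro i
        rw [Real.dist_eq]
        simp only [hX1, Prod.snd_add, Prod.fst_add, Prod.smul_snd, Prod.smul_fst, hu3,
          Pi.add_apply, Pi.smul_apply, smul_eq_mul]
        by_cases hij : i = j
        · subst hij
          simp only [Pi.single_eq_same, mul_one]
          have : |h| < R - |y1 i - η i| := abs_lt.2 hh
          calc |y1 i + h - η i| = |(y1 i - η i) + h| := by ring_nf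
            _ ≤ |y1 i - η i| + |h| := abs_add_le _ _
            _ ≤ R := by linarith
        · simp only [Pi.single_eq_of_ne hij, mul_zero, add_zero]
          exact hlat i
      · simp [hX1, hu2, hz0, hz1]
    have h1' := (hyloc e1 0 rfl rfl rfl).hasDerivAt_eq_zero
      (hW e1 _ _ (hFh e1 rfl) (hbd e1 rfl _ hYd1))
    have h2' := (hyloc e2 1 rfl rfl rfl).hasDerivAt_eq_zero
      (hW e2 _ _ (hFh e2 rfl) (hbd e2 rfl _ hYd2))
    -- vertical direction
    have hzloc : ∀ᶠ h in nhds (0:ℝ), -K' < z1 + h ∧ z1 + h < 0 := by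
      have : Set.Ioo (-K' - z1) (-z1) ∈ nhds (0:ℝ) := Ioo_mem_nhds (by linarith) (by linarith)
      filter_upwards [this] with h hh
      exact ⟨by linarith [hh.1], by linarith [hh.2]⟩
    have hzc : ∀ h : ℝ, (X1 + h • eZ).2.2 = z1 + h := by intro h; simp [hX1, eZ]
    obtain ⟨hz', hzz'⟩ := second_test (f := fun h : ℝ => F (X1 + h • eZ))
      (f1 := fun h : ℝ => 2 * (c (z1 + h) * Dd v r (X1 + h • eZ)) *
        (c1 (z1 + h) * Dd v r (X1 + h • eZ) + c (z1 + h) * Dd eZ (Dd v r) (X1 + h • eZ))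
        + 12 * r (X1 + h • eZ) * Dd eZ r (X1 + h • eZ))
      (f2 := 2 * (c1 z1 * Dd v r X1 + c z1 * Dd eZ (Dd v r) X1) ^ 2
        + 2 * (c z1 * Dd v r X1) * (c2 z1 * Dd v r X1 + 2 * c1 z1 * Dd eZ (Dd v r) X1
          + c z1 * Dd eZ (Dd eZ (Dd v r)) X1)
        + 12 * Dd eZ r X1 ^ 2 + 12 * r X1 * Dd eZ (Dd eZ r) X1)
      (by
        filter_upwards [hzloc] with h hh
        have e : b (X1 + h • eZ) = b X1 := by simp [b, Y, eZ, hX1]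
        have := hFle (X1 + h • eZ) (by
          refine ⟨?_, ?_, ?_⟩
          · simp [hX1, eZ, hs0, hst]
          · simpa [hX1, eZ] using hy1
          · rw [Set.mem_Icc, hzc]; exact ⟨hh.1.le, hh.2.le⟩)
        rw [e] at this
        simp only [zero_smul, add_zero]
        linarith)
      (by
        filter_upwards [hzloc] with h hh
        have e : (fun h : ℝ => F (X1 + h • eZ)) = fun h : ℝ =>
          (c (z1 + h) * Dd v r (X1 + h • eZ)) ^ 2 + 6 * r (X1 + h • eZ) ^ 2 := by
          funext h; simp only [F, hzc]
        rw [e]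
        have k1 : HasDerivAt (fun h => c (z1 + h)) (c1 (z1 + h)) h :=
          HasDerivAt.comp_const_add z1 h (hc1 _ hh.2)
        refine (((k1.mul (hasDerivAt_slice hq X1 eZ h)).pow 2).add
          (((hasDerivAt_slice hr X1 eZ h).pow 2).const_mul 6)).congr_deriv ?_
        simp; ring)
      (by
        have k1 : HasDerivAt (fun h => c (z1 + h)) (c1 z1) 0 :=
          HasDerivAt.comp_const_add z1 0 (by simpa using hc1 _ hz1')
        have k2 : HasDerivAt (fun h => c1 (z1 + h)) (c2 z1) 0 :=
          HasDerivAt.comp_const_add z1 0 (by simpa using hc2 _ hz1')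
        have q0 := hd eZ hq
        have q1 := hd eZ (Dd_smooth hq eZ)
        have r0 := hd eZ hr
        have r1 := hd eZ (Dd_smooth hr eZ)
        refine ((((k1.mul q0).const_mul 2).mul ((k2.mul q0).add (k1.mul q1))).add
          ((r0.const_mul 12).mul r1)).congr_deriv ?_
        simp; ring)
    simp only [zero_smul, add_zero] at hz'
    have hX1eq := heq X1 ⟨hs0', by linarith [ht0.2]⟩ hz1'
    have hX1eqv := eq_diff hr hH hw1 hw2 hw3 heq v X1 ⟨hs0', by linarith [ht0.2]⟩ hz1'
    have hGX := hG s1 ⟨hs0, hst⟩ (y1, z1) hy1 hz0 hz1'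
    obtain ⟨hB1, hB2⟩ := hB X1 hsT hz1
    refine alg_contra (c z1 * Dd v r X1) (c z1) (c1 z1) (c2 z1) (Dd v r X1) (Dd eT (Dd v r) X1)
      (Dd e1 (Dd v r) X1) (Dd e2 (Dd v r) X1) (Dd eZ (Dd v r) X1) (Dd eZ (Dd eZ (Dd v r)) X1)
      (r X1) (Dd eT r X1) (Dd e1 r X1) (Dd e2 r X1) (Dd eZ r X1) (Dd eZ (Dd eZ r) X1)
      (w1 X1) (w2 X1) (w3 X1) (Dd v w1 X1) (Dd v w2 X1) (Dd v w3 X1) (H X1) (Dd v H X1)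
      (b X1) _ _ _ (g s1) δ κ ε hε hδ hcon hb1 rfl hT (sub_eq_zero.1 h1') (sub_eq_zero.1 h2')
      hz' hzz' hX1eq hX1eqv ?_ hFX1 hGX (hcc X1 hz1')
    -- barrier is a supersolution
    set E0 := Real.exp (2 * B * s1) / k0 with hE0
    have hE0p : 0 < E0 := by positivity
    have : 0 ≤ kp * E0 * ((1 + (y1 0 - η 0) ^ 2 + (y1 1 - η 1) ^ 2) * (2 * B)
        + w1 X1 * (2 * (y1 0 - η 0)) + w2 X1 * (2 * (y1 1 - η 1))) := by
      apply mul_nonneg (by positivity)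
      exact barrier_ineq hB0 hB1 hB2
    have e : kp * E0 * ((1 + (y1 0 - η 0) ^ 2 + (y1 1 - η 1) ^ 2) * (2 * B)
        + w1 X1 * (2 * (y1 0 - η 0)) + w2 X1 * (2 * (y1 1 - η 1)))
      = kp * ((1 + (y1 0 - η 0) ^ 2 + (y1 1 - η 1) ^ 2) * (2 * B * Real.exp (2 * B * s1)) / k0)
        + w1 X1 * (kp * (2 * (y1 0 - η 0) * Real.exp (2 * B * s1) / k0))
        + w2 X1 * (kp * (2 * (y1 1 - η 1) * Real.exp (2 * B * s1) / k0)) := by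
      rw [hE0]; ring
    linarith
  have hfin : Φ (t0, x0) < 1 := lt_of_le_of_lt (hmax hX0Q) key
  have hb0 : 0 < b (t0, x0) := by have := hbpos (t0, x0) ht0.1.le; linarith
  simp only [Φ] at hfin
  rw [div_lt_one (by positivity)] at hfin
  have h1 : |c x0.2 * Dd v r (t0, x0)| ≤ b (t0, x0) := by
    apply abs_le_of_sq_le_sq _ hb0.le
    simp only [F] at hfin
    nlinarith [sq_nonneg (r (t0, x0))]
  have h2 : Y (t0, x0) = 1 / 2 := by
    simp only [Y, hη, hk0]
    have := Real.exp_pos (2 * B * t0)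
    field_simp
    simp
  have h3 : (1 / 2 : ℝ) ^ k ≤ δ := by
    rw [one_div_pow]
    have h4 : (0:ℝ) < 2 ^ k := by positivity
    rw [div_lt_iff₀ hδ] at hkδ
    rw [div_le_iff₀ h4]
    linarith
  have h5 : a t0 = m + (∫ s in (0 : ℝ)..t0, g s) + δ * (1 + t0) := by
    simp only [a]
    rw [intervalIntegral.integral_add (hg.intervalIntegrable _ _) (by simp)]
    simp; ring
  have h6 : b (t0, x0) = a t0 + (1 / 2 : ℝ) ^ k := by simp only [b]; rw [h2]
  linarith

lemma fderiv_bridge {f : ℝ → ((Fin 2 → ℝ) × ℝ) → ℝ}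
    (hf : ContDiff ℝ (⊤ : ℕ∞) (fun p : EE => f p.1 p.2)) (s : ℝ) (x u : (Fin 2 → ℝ) × ℝ) :
    fderiv ℝ (f s) x u = Dd (0, u) (fun p : EE => f p.1 p.2) (s, x) := by
  have h1 : HasFDerivAt (fun p : EE => f p.1 p.2) (fderiv ℝ (fun p : EE => f p.1 p.2) (s, x)) (s, x) :=
    (hf.differentiable (by simp) _).hasFDerivAt
  have h2 := h1.comp x (hasFDerivAt_prodMk_right s x)
  have h3 : ((fun p : EE => f p.1 p.2) ∘ fun y => (s, y)) = f s := rfl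
  rw [h3] at h2
  rw [h2.fderiv]
  simp [Dd]

lemma dzD_bridge {f : ℝ → ((Fin 2 → ℝ) × ℝ) → ℝ}
    (hf : ContDiff ℝ (⊤ : ℕ∞) (fun p : EE => f p.1 p.2)) (s : ℝ) :
    dzD (f s) = fun x => Dd eZ (fun p : EE => f p.1 p.2) (s, x) := by
  funext x
  exact fderiv_bridge hf s x _

lemma dzD_fderiv_bridge {f : ℝ → ((Fin 2 → ℝ) × ℝ) → ℝ}
    (hf : ContDiff ℝ (⊤ : ℕ∞) (fun p : EE => f p.1 p.2)) (s : ℝ) (x u : (Fin 2 → ℝ) × ℝ) :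
    fderiv ℝ (dzD (f s)) x u = Dd (0, u) (Dd eZ (fun p : EE => f p.1 p.2)) (s, x) := by
  rw [dzD_bridge hf s]
  exact fderiv_bridge (f := fun s x => Dd eZ (fun p : EE => f p.1 p.2) (s, x)) (Dd_smooth hf eZ) s x u

lemma deriv_bridge {f : ℝ → ((Fin 2 → ℝ) × ℝ) → ℝ}
    (hf : ContDiff ℝ (⊤ : ℕ∞) (fun p : EE => f p.1 p.2)) (s : ℝ) (x : (Fin 2 → ℝ) × ℝ) :
    deriv (fun s => f s x) s = Dd eT (fun p : EE => f p.1 p.2) (s, x) := by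
  have h := hasDerivAt_slice hf (0, x) eT s
  have e : (fun h : ℝ => (fun p : EE => f p.1 p.2) ((0, x) + h • eT)) = fun s => f s x := by
    funext h
    have : x + (0, 0) = x := add_zero x
    simp [eT, this]
  have e' : (((0, x) + s • eT) : EE) = (s, x) := by
    have : x + (0, 0) = x := add_zero x
    simp [eT, this]
  rw [e, e'] at h
  exact h.deriv

lemma tangential_zero {f : EE → ℝ} (hf : ContDiff ℝ (⊤ : ℕ∞) f) {s : ℝ} {v : EE}
    (hv1 : v.1 = 0) (hv2 : v.2.2 = 0) (h0 : ∀ y, f (s, (y, 0)) = 0) (y : Fin 2 → ℝ) :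
    Dd v f (s, (y, 0)) = 0 := by
  have h := hasDerivAt_slice hf (s, (y, 0)) v 0
  have e : (fun h : ℝ => f ((s, (y, 0)) + h • v)) = fun _ => 0 := by
    funext h
    have : (((s, (y, 0)) + h • v) : EE) = (s, (y + h • v.2.1, 0)) := by
      ext <;> simp [hv1, hv2]
    rw [this, h0]
  rw [e] at h
  simpa using h.unique (hasDerivAt_const _ _)

lemma mvt_z {f : EE → ℝ} (hf : ContDiff ℝ (⊤ : ℕ∞) f) {s M : ℝ} {y : Fin 2 → ℝ}
    (h0 : f (s, (y, 0)) = 0) (hM : ∀ z < 0, |Dd eZ f (s, (y, z))| ≤ M) {z : ℝ} (hz : z < 0) :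
    |f (s, (y, z))| ≤ M * (-z) := by
  have hs : ∀ h : ℝ, HasDerivAt (fun h : ℝ => f (s, (y, h))) (Dd eZ f (s, (y, h))) h := by
    intro h
    have := hasDerivAt_slice hf (s, (y, 0)) eZ h
    simpa [eZ] using this
  obtain ⟨c, hc, he⟩ := exists_hasDerivAt_eq_slope _ _ hz
    (fun u _ => (hs u).continuousAt.continuousWithinAt) (fun u _ => hs u)
  have h1 := hM c hc.2
  rw [he, h0, abs_div, zero_sub, abs_neg, abs_of_pos (by linarith : 0 < 0 - z),
    div_le_iff₀ (by linarith)] at h1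
  simpa using h1

noncomputable def Gf (r H w1 w2 w3 : EE → ℝ) (v : EE) (c c1 : ℝ → ℝ) (X : EE) : ℝ :=
  |c X.2.2 * (Dd v H X - Dd v w1 X * Dd e1 r X
          - Dd v w2 X * Dd e2 r X - Dd v w3 X * Dd eZ r X)
          + w3 X * c1 X.2.2 * Dd v r X| + 3 * |H X|

theorem core2 {r H w1 w2 w3 : EE → ℝ} {ε T B m K : ℝ} {v : EE} {c c1 c2 : ℝ → ℝ}
    {I : ℝ → ℝ≥0∞} {A : ℝ≥0∞} (hA : A ≠ ⊤)
    (hε : 0 < ε) (hB0 : 0 ≤ B) (hm : 0 ≤ m)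
    (hr : ContDiff ℝ (⊤ : ℕ∞) r) (hH : ContDiff ℝ (⊤ : ℕ∞) H)
    (hw1 : ContDiff ℝ (⊤ : ℕ∞) w1) (hw2 : ContDiff ℝ (⊤ : ℕ∞) w2) (hw3 : ContDiff ℝ (⊤ : ℕ∞) w3)
    (heq : ∀ X : EE, X.1 ∈ Set.Ioo 0 T → X.2.2 < 0 →
      Dd eT r X + (w1 X * Dd e1 r X + w2 X * Dd e2 r X + w3 X * Dd eZ r X)
        = ε * Dd eZ (Dd eZ r) X + H X)
    (hcont : ContinuousOn c (Set.Iic 0)) (hcont1 : ContinuousOn c1 (Set.Iic 0))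
    (hc1 : ∀ z < 0, HasDerivAt c (c1 z) z) (hc2 : ∀ z < 0, HasDerivAt c1 (c2 z) z)
    (hB : ∀ X : EE, X.1 ∈ Set.Icc 0 T → X.2.2 ≤ 0 → |w1 X| ≤ B ∧ |w2 X| ≤ B)
    (htop : ∀ s ∈ Set.Icc 0 T, ∀ y, r (s, (y, 0)) = 0 ∧ c 0 * Dd v r (s, (y, 0)) = 0)
    (hbot : ∀ s ∈ Set.Icc 0 T, ∀ y, ∀ z < -K, r (s, (y, z)) = 0 ∧ Dd v r (s, (y, z)) = 0)
    (hinit : ∀ x : (Fin 2 → ℝ) × ℝ, x.2 < 0 →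
      (c x.2 * Dd v r (0, x)) ^ 2 + 6 * r (0, x) ^ 2 ≤ m ^ 2)
    (hcc : ∀ X : EE, X.2.2 < 0 → 0 ≤ (c X.2.2 * c2 X.2.2 - 3 * c1 X.2.2 ^ 2) * Dd v r X ^ 2
      + 6 * Dd eZ r X ^ 2)
    (hI : ∀ s ∈ Set.Icc 0 T, ∀ x : (Fin 2 → ℝ) × ℝ, x.2 < 0 →
      ENNReal.ofReal (Gf r H w1 w2 w3 v c c1 (s, x)) ≤ A * I s)
    (x0 : (Fin 2 → ℝ) × ℝ) (hx0 : x0.2 < 0) (t : ℝ) (ht : t ∈ Set.Icc 0 T) :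
    ENNReal.ofReal |c x0.2 * Dd v r (t, x0)| ≤
      ENNReal.ofReal m + A * ∫⁻ s in Set.Icc 0 t, I s := by
  -- interior times
  have hint : ∀ t0 ∈ Set.Ioo 0 T, ENNReal.ofReal |c x0.2 * Dd v r (t0, x0)| ≤
      ENNReal.ofReal m + A * ∫⁻ s in Set.Icc 0 t0, I s := by
    intro t0 ht0
    obtain ⟨R, hR, hcore⟩ := core (K' := |K| + 1 + |x0.2|) (x0 := x0) hε hB0 hm hr hH hw1 hw2 hw3 heq
      hcont hc1 hc2 hB htop
      (fun s hs y => hbot s hs y _ (by linarith [le_abs_self K, abs_nonneg x0.2])) hinit hcc ht0 hx0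
      (by linarith [neg_abs_le x0.2, abs_nonneg K])
    set K' := |K| + 1 + |x0.2|
    let D : Set ((Fin 2 → ℝ) × ℝ) := Metric.closedBall x0.1 R ×ˢ Set.Icc (-K') 0
    have hD : IsCompact D := (isCompact_closedBall _ _).prod isCompact_Icc
    let cl : ((Fin 2 → ℝ) × ℝ) → ((Fin 2 → ℝ) × ℝ) := fun x => (x.1, min x.2 0)
    let G : ℝ → ((Fin 2 → ℝ) × ℝ) → ℝ := fun s x => Gf r H w1 w2 w3 v c c1 (s, cl x)
    have hGc : Continuous (fun p : EE => G p.1 p.2) := by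
      have k : Continuous (fun p : EE => ((p.1, cl p.2) : EE)) := by
        simp only [cl]; fun_prop
      have kc : ∀ {f : ℝ → ℝ}, ContinuousOn f (Set.Iic 0) →
          Continuous (fun p : EE => f (cl p.2).2) := by
        intro f hf
        refine hf.comp_continuous (by simp only [cl]; fun_prop) (fun p => ?_)
        simp [cl]
      have a1 := kc hcont
      have a2 := kc hcont1
      have a3 := (Dd_smooth hH v).continuous.comp k
      have a4 := (Dd_smooth hw1 v).continuous.comp k
      have a5 := (Dd_smooth hw2 v).continuous.comp k
      have a6 := (Dd_smooth hw3 v).continuous.comp k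
      have a7 := (Dd_smooth hr e1).continuous.comp k
      have a8 := (Dd_smooth hr e2).continuous.comp k
      have a9 := (Dd_smooth hr eZ).continuous.comp k
      have a10 := (Dd_smooth hr v).continuous.comp k
      have a11 := hw3.continuous.comp k
      have a12 := hH.continuous.comp k
      exact ((a1.mul (((a3.sub (a4.mul a7)).sub (a5.mul a8)).sub (a6.mul a9))).add ((a11.mul a2).mul a10)).abs.add
          (a12.abs.const_smul (3:ℝ))
    have hGnn : ∀ s x, 0 ≤ G s x := by
      intro s x; simp only [G, Gf]; positivity
    let g : ℝ → ℝ := fun s => sSup (G s '' D)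
    have hg : Continuous g := hD.continuous_sSup hGc
    have hg0 : ∀ s, 0 ≤ g s := by
      intro s
      apply Real.sSup_nonneg
      rintro _ ⟨x, _, rfl⟩
      exact hGnn s x
    have hGs : ∀ s, Continuous (G s) := fun s => hGc.comp (by fun_prop : Continuous fun x => ((s, x) : EE))
    have hGle : ∀ s, ∀ x ∈ D, G s x ≤ g s := by
      intro s x hx
      exact le_csSup (hD.image (hGs s)).bddAbove ⟨x, hx, rfl⟩
    have hcl : ∀ x : (Fin 2 → ℝ) × ℝ, x.2 ≤ 0 → cl x = x := by
      intro x hx; simp [cl, hx]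
    have hbound := hcore g hg hg0 (by
      intro s hs x hx hxk hxz
      have := hGle s x ⟨hx, hxk, hxz.le⟩
      simp only [G, hcl x hxz.le] at this
      exact this)
    have hb2 : |c x0.2 * Dd v r (t0, x0)| ≤ m + ∫ s in (0 : ℝ)..t0, g s := by
      apply le_of_forall_pos_le_add
      intro η hη
      have hp : 0 < 2 + t0 := by linarith [ht0.1]
      have := hbound (η / (2 + t0)) (by positivity)
      have e : η / (2 + t0) * (1 + t0) + η / (2 + t0) = η := by field_simp; ring
      linarith
    have hgI : ∀ s ∈ Set.Icc 0 t0, ENNReal.ofReal (g s) ≤ A * I s := by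
      intro s hs
      by_cases htop' : A * I s = ⊤
      · rw [htop']; exact le_top
      · apply ENNReal.ofReal_le_of_le_toReal
        apply Real.sSup_le _ ENNReal.toReal_nonneg
        rintro _ ⟨x, hx, rfl⟩
        have hx2 : x ∈ closure (Set.univ ×ˢ Set.Iio (0:ℝ) : Set ((Fin 2 → ℝ) × ℝ)) := by
          rw [closure_prod_eq, closure_univ, closure_Iio]
          exact ⟨trivial, hx.2.2⟩
        refine le_on_closure (f := G s) (g := fun _ => (A * I s).toReal) ?_ (hGs s).continuousOn
          continuousOn_const hx2
        intro x' hx'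
        have hz : x'.2 < 0 := hx'.2
        have := hI s ⟨hs.1, by linarith [hs.2, ht0.2]⟩ x' hz
        simp only [G, hcl x' hz.le]
        exact (ENNReal.ofReal_le_iff_le_toReal htop').1 this
    calc ENNReal.ofReal |c x0.2 * Dd v r (t0, x0)|
        ≤ ENNReal.ofReal (m + ∫ s in (0 : ℝ)..t0, g s) := ENNReal.ofReal_le_ofReal hb2
      _ ≤ ENNReal.ofReal m + ENNReal.ofReal (∫ s in (0 : ℝ)..t0, g s) := ENNReal.ofReal_add_le
      _ ≤ ENNReal.ofReal m + A * ∫⁻ s in Set.Icc 0 t0, I s := by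
          gcongr
          rw [intervalIntegral.integral_of_le ht0.1.le,
            ofReal_integral_eq_lintegral_ofReal
              ((hg.intervalIntegrable 0 t0).1) (Filter.Eventually.of_forall hg0)]
          calc ∫⁻ s in Set.Ioc 0 t0, ENNReal.ofReal (g s)
              ≤ ∫⁻ s in Set.Icc 0 t0, ENNReal.ofReal (g s) :=
                lintegral_mono_set Set.Ioc_subset_Icc_self
            _ ≤ ∫⁻ s in Set.Icc 0 t0, A * I s := setLIntegral_mono' measurableSet_Icc hgI
            _ = A * ∫⁻ s in Set.Icc 0 t0, I s := lintegral_const_mul' _ _ hA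
  rcases ht.1.eq_or_lt with h0 | h0
  · subst h0
    refine le_trans ?_ le_self_add
    apply ENNReal.ofReal_le_ofReal
    apply abs_le_of_sq_le_sq _ hm
    have := hinit x0 hx0
    nlinarith [sq_nonneg (r (0, x0))]
  rcases ht.2.lt_or_eq with h1 | h1
  · exact hint t ⟨h0, h1⟩
  · subst h1
    have hc : Continuous (fun s : ℝ => ENNReal.ofReal |c x0.2 * Dd v r (s, x0)|) := by
      have : Continuous fun s : ℝ => Dd v r (s, x0) :=
        (Dd_smooth hr v).continuous.comp (by fun_prop)
      exact ENNReal.continuous_ofReal.comp (this.const_smul (c x0.2)).abs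
    refine le_of_tendsto (hc.continuousWithinAt (s := Set.Iio t) (x := t)) ?_
    filter_upwards [Ioo_mem_nhdsLT h0] with s hs
    refine (hint s hs).trans ?_
    gcongr
    exact hs.2.le

lemma abs_le_of_supNormS {g : ((Fin 2 → ℝ) × ℝ) → ℝ} {M : ℝ≥0∞} (h : supNormS g ≤ M) (hM : M ≠ ⊤)
    {x : (Fin 2 → ℝ) × ℝ} (hx : x.2 < 0) : |g x| ≤ M.toReal := by
  have h1 : (‖g x‖₊ : ℝ≥0∞) ≤ M :=
    le_trans (le_iSup₂_of_le (f := fun x (_ : x ∈ lowerHalf) => (‖g x‖₊ : ℝ≥0∞)) x hx le_rfl) h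
  have := ENNReal.toReal_mono hM h1
  simpa using this

lemma supNormS_le_conormInf (k : ℕ) (g : ((Fin 2 → ℝ) × ℝ) → ℝ) :
    supNormS g ≤ conormInf k g := by
  have : (0 : Fin 3 → ℕ) ∈ multiIdx k := by simp [multiIdx]
  refine le_trans (le_of_eq ?_) (Finset.single_le_sum
    (f := fun α => supNormS (Zpow α g)) (fun _ _ => zero_le) this)
  simp [Zpow]

lemma supNormS_Zop_le_conormInf (k : ℕ) (hk : 1 ≤ k) (i : Fin 3) (g : ((Fin 2 → ℝ) × ℝ) → ℝ) :
    supNormS (Zop i g) ≤ conormInf k g := by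
  have : (Pi.single i 1 : Fin 3 → ℕ) ∈ multiIdx k := by
    simp only [multiIdx, Finset.mem_filter, Finset.mem_Icc]
    refine ⟨⟨fun j => Nat.zero_le _, fun j => ?_⟩, ?_⟩
    · by_cases h : j = i
      · subst h; simpa using hk
      · simp [Pi.single_eq_of_ne h]
    · fin_cases i <;> simpa [Pi.single_apply] using hk
  refine le_trans (le_of_eq ?_) (Finset.single_le_sum
    (f := fun α => supNormS (Zpow α g)) (fun _ _ => zero_le) this)
  fin_cases i <;> simp [Zpow, Pi.single_apply]

lemma Zop0 (g : ((Fin 2 → ℝ) × ℝ) → ℝ) (x) : Zop 0 g x = fderiv ℝ g x (Pi.single 0 1, (0 : ℝ)) := rfl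
lemma Zop1 (g : ((Fin 2 → ℝ) × ℝ) → ℝ) (x) : Zop 1 g x = fderiv ℝ g x (Pi.single 1 1, (0 : ℝ)) := rfl
lemma Zop2 (g : ((Fin 2 → ℝ) × ℝ) → ℝ) (x) : Zop 2 g x = x.2 / (1 - x.2) * dzD g x := rfl

lemma wE_Zop (w : ℝ → ((Fin 2 → ℝ) × ℝ) → Fin 3 → ℝ) (s : ℝ) (i j : Fin 3) :
    supNormS (Zop i (fun x => w s x j)) ≤ wE2inf w s := by
  refine (supNormS_Zop_le_conormInf 2 (by norm_num) i _).trans ?_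
  refine le_trans (Finset.single_le_sum (f := fun j => conormInf 2 (fun x => w s x j))
    (fun _ _ => zero_le) (Finset.mem_univ j)) le_self_add

lemma wE_dz (w : ℝ → ((Fin 2 → ℝ) × ℝ) → Fin 3 → ℝ) (s : ℝ) (j : Fin 3) :
    supNormS (dzD (fun x => w s x j)) ≤ wE2inf w s := by
  refine (supNormS_le_conormInf 1 _).trans ?_
  refine le_trans (Finset.single_le_sum (f := fun j => conormInf 1 (dzD (fun x => w s x j)))
    (fun _ _ => zero_le) (Finset.mem_univ j)) le_add_self

lemma wE_Zdz (w : ℝ → ((Fin 2 → ℝ) × ℝ) → Fin 3 → ℝ) (s : ℝ) (i j : Fin 3) :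
    supNormS (Zop i (dzD (fun x => w s x j))) ≤ wE2inf w s := by
  refine (supNormS_Zop_le_conormInf 1 le_rfl i _).trans ?_
  refine le_trans (Finset.single_le_sum (f := fun j => conormInf 1 (dzD (fun x => w s x j)))
    (fun _ _ => zero_le) (Finset.mem_univ j)) le_add_self

lemma abs_bound5 (a b1 b2 b3 d : ℝ) : |a - b1 - b2 - b3 + d| ≤ |a| + |b1| + |b2| + |b3| + |d| := by
  have h1 := abs_add_le (a - b1 - b2 - b3) d
  have h2 := abs_sub (a - b1 - b2) b3
  have h3 := abs_sub (a - b1) b2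
  have h4 := abs_sub a b1
  linarith

lemma bound_tan {z Hv v1 v2 v3 r1 r2 rz H W R N : ℝ} (hz : z < 0) (hW : 0 ≤ W) (hR : 0 ≤ R)
    (hHv : |Hv| ≤ N) (hH : |H| ≤ N) (h1 : |v1| ≤ W) (h2 : |v2| ≤ W) (h3 : |v3| ≤ W)
    (h3' : |v3| ≤ W * (-z)) (hr1 : |r1| ≤ R) (hr2 : |r2| ≤ R) (hrz : |z / (1 - z) * rz| ≤ R) (w q : ℝ) :
    |1 * (Hv - v1 * r1 - v2 * r2 - v3 * rz) + w * 0 * q| + 3 * |H| ≤ 10 * (W * R + N) := by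
  have h := abs_bound5 Hv (v1 * r1) (v2 * r2) (v3 * rz) (w * 0 * q)
  rw [one_mul]
  have a1 : |v1 * r1| ≤ W * R := by rw [abs_mul]; gcongr
  have a2 : |v2 * r2| ≤ W * R := by rw [abs_mul]; gcongr
  have hp : 0 < 1 - z := by linarith
  have a3 : |v3 * rz| ≤ 2 * (W * R) := by
    have k1 : |v3| * (1 - z) ≤ 2 * W * (-z) := by nlinarith
    have k2 : |z / (1 - z) * rz| = (-z) / (1 - z) * |rz| := by
      rw [abs_mul, abs_div, abs_of_neg hz, abs_of_pos hp]
    rw [k2] at hrz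
    calc |v3 * rz| = (|v3| * (1 - z)) * (|rz| / (1 - z)) := by rw [abs_mul]; field_simp
      _ ≤ (2 * W * (-z)) * (|rz| / (1 - z)) := by gcongr
      _ = 2 * (W * ((-z) / (1 - z) * |rz|)) := by ring
      _ ≤ 2 * (W * R) := by gcongr
  have a4 : |w * 0 * q| = 0 := by simp
  have : 0 ≤ W * R := by positivity
  have : 0 ≤ N := le_trans (abs_nonneg _) hH
  linarith

lemma bound_nor {z Hv v1 v2 v3 r1 r2 rz H W R N w : ℝ} (hz : z < 0) (hW : 0 ≤ W) (hR : 0 ≤ R)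
    (hHv : |z / (1 - z) * Hv| ≤ N) (hH : |H| ≤ N) (h1 : |v1| ≤ W) (h2 : |v2| ≤ W) (h3 : |v3| ≤ W)
    (hw : |w| ≤ W * (-z)) (hr1 : |r1| ≤ R) (hr2 : |r2| ≤ R) (hrz : |z / (1 - z) * rz| ≤ R) :
    |z / (1 - z) * (Hv - v1 * r1 - v2 * r2 - v3 * rz) + w * (1 / (1 - z) ^ 2) * rz| + 3 * |H|
      ≤ 10 * (W * R + N) := by
  have hp : 0 < 1 - z := by linarith
  set φ := z / (1 - z) with hφ
  have hφ1 : |φ| ≤ 1 := by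
    rw [hφ, abs_div, abs_of_neg hz, abs_of_pos hp, div_le_one hp]; linarith
  have h := abs_bound5 (φ * Hv) (φ * (v1 * r1)) (φ * (v2 * r2)) (v3 * (φ * rz))
    (w * (1 / (1 - z) ^ 2) * rz)
  have e : φ * (Hv - v1 * r1 - v2 * r2 - v3 * rz) + w * (1 / (1 - z) ^ 2) * rz
    = φ * Hv - φ * (v1 * r1) - φ * (v2 * r2) - v3 * (φ * rz) + w * (1 / (1 - z) ^ 2) * rz := by ring
  rw [e]
  have a1 : |φ * (v1 * r1)| ≤ 1 * (W * R) := by rw [abs_mul, abs_mul]; gcongr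
  have a2 : |φ * (v2 * r2)| ≤ 1 * (W * R) := by rw [abs_mul, abs_mul]; gcongr
  have a3 : |v3 * (φ * rz)| ≤ W * R := by rw [abs_mul]; gcongr
  have a4 : |w * (1 / (1 - z) ^ 2) * rz| ≤ W * R := by
    have k2 : |φ * rz| = (-z) / (1 - z) * |rz| := by
      rw [abs_mul, hφ, abs_div, abs_of_neg hz, abs_of_pos hp]
    rw [k2] at hrz
    have k3 : (1 / (1 - z)) ≤ 1 := by rw [div_le_one hp]; linarith
    calc |w * (1 / (1 - z) ^ 2) * rz| = |w| * (1 / (1 - z) ^ 2) * |rz| := by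
          rw [abs_mul, abs_mul, abs_of_pos (by positivity : 0 < 1 / (1 - z) ^ 2)]
      _ ≤ (W * (-z)) * (1 / (1 - z) ^ 2) * |rz| := by gcongr
      _ = W * ((-z) / (1 - z) * |rz|) * (1 / (1 - z)) := by field_simp
      _ ≤ W * R * 1 := by gcongr
      _ = W * R := mul_one _
  have : 0 ≤ W * R := by positivity
  have : 0 ≤ N := le_trans (abs_nonneg _) hH
  linarith

set_option maxHeartbeats 1000000 in
/-- Lemma 9.6 of the paper: `L^∞` conormal estimate for a convection–diffusion equation
`∂_t ρ + w·∇ρ = ε ∂_zz ρ + 𝓗` in the half-space with homogeneous Dirichlet boundary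
condition and a convection field whose normal component vanishes at the boundary. -/
theorem fokker_planck_conormal_linfty :
    ∃ C : ℝ, 0 < C ∧
      ∀ (T ε K : ℝ), 0 < T → 0 < ε → 0 < K →
        ∀ (w : ℝ → ((Fin 2 → ℝ) × ℝ) → Fin 3 → ℝ)
          (ρ 𝓗 : ℝ → ((Fin 2 → ℝ) × ℝ) → ℝ),
          -- smoothness
          ContDiff ℝ (⊤ : ℕ∞) (fun p : ℝ × ((Fin 2 → ℝ) × ℝ) => w p.1 p.2) →
          ContDiff ℝ (⊤ : ℕ∞) (fun p : ℝ × ((Fin 2 → ℝ) × ℝ) => ρ p.1 p.2) →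
          ContDiff ℝ (⊤ : ℕ∞) (fun p : ℝ × ((Fin 2 → ℝ) × ℝ) => 𝓗 p.1 p.2) →
          -- `w` is bounded together with all its partial derivatives on the domain
          (∀ n : ℕ, ∃ B : ℝ, ∀ t ∈ Set.Icc 0 T, ∀ x : (Fin 2 → ℝ) × ℝ, x.2 ≤ 0 →
            ‖iteratedFDeriv ℝ n (fun p : ℝ × ((Fin 2 → ℝ) × ℝ) => w p.1 p.2) (t, x)‖ ≤ B) →
          -- the normal component of `w` vanishes at the boundary
          (∀ t ∈ Set.Icc 0 T, ∀ y : Fin 2 → ℝ, w t (y, 0) 2 = 0) →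
          -- `ρ` and `𝓗` vanish for `z ≤ −K`
          (∀ t ∈ Set.Icc 0 T, ∀ x : (Fin 2 → ℝ) × ℝ, x.2 ≤ -K → ρ t x = 0 ∧ 𝓗 t x = 0) →
          -- all the quantities appearing in the estimate are finite
          (∀ s ∈ Set.Icc 0 T,
            (∀ i : Fin 3, supNormS (Zop i (ρ s)) ≠ ⊤) ∧
            supNormS (ρ s) ≠ ⊤ ∧ wE2inf w s ≠ ⊤ ∧
            supNormS (dzD (dzD (fun x => w s x 2))) ≠ ⊤ ∧
            conormInf 1 (ρ s) ≠ ⊤ ∧ conormL2 4 (ρ s) ≠ ⊤ ∧ conormInf 1 (𝓗 s) ≠ ⊤) →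
          -- the equation `∂_t ρ + w·∇ρ = ε ∂_zz ρ + 𝓗` on `(0,T) × S`
          (∀ t ∈ Set.Ioo 0 T, ∀ x ∈ lowerHalf,
            deriv (fun s => ρ s x) t
              + (w t x 0 * fderiv ℝ (ρ t) x (Pi.single 0 1, (0 : ℝ))
                + w t x 1 * fderiv ℝ (ρ t) x (Pi.single 1 1, (0 : ℝ))
                + w t x 2 * dzD (ρ t) x)
            = ε * dzD (dzD (ρ t)) x + 𝓗 t x) →
          -- the homogeneous Dirichlet boundary condition `ρ(t,y,0) = 0`
          (∀ t ∈ Set.Icc 0 T, ∀ y : Fin 2 → ℝ, ρ t (y, 0) = 0) →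
          -- conclusion
          ∀ i : Fin 3, ∀ t ∈ Set.Icc 0 T,
            supNormS (Zop i (ρ t))
              ≤ ENNReal.ofReal C *
                (supNormS (Zop i (ρ 0)) + supNormS (ρ 0)
                  + ∫⁻ s in Set.Icc 0 t,
                      ((wE2inf w s + supNormS (dzD (dzD (fun x => w s x 2))))
                          * (conormInf 1 (ρ s) + conormL2 4 (ρ s))
                        + conormInf 1 (𝓗 s))) := by
  refine ⟨10, by norm_num, ?_⟩
  intro T ε K hT hε hK w ρ 𝓗 hw hρ hH hwB hw0 hvan hfin hpde hbc
  have hwj : ∀ j : Fin 3, ContDiff ℝ (⊤ : ℕ∞) (fun p : EE => w p.1 p.2 j) :=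
    fun j => (contDiff_pi.1 hw) j
  set r : EE → ℝ := fun p => ρ p.1 p.2 with hr_def
  set H : EE → ℝ := fun p => 𝓗 p.1 p.2 with hH_def
  set W : Fin 3 → EE → ℝ := fun j p => w p.1 p.2 j with hW_def
  obtain ⟨B0, hB0⟩ := hwB 0
  have hBb : ∀ X : EE, X.1 ∈ Set.Icc 0 T → X.2.2 ≤ 0 → |W 0 X| ≤ |B0| ∧ |W 1 X| ≤ |B0| := by
    intro X h1 h2
    have h3 := hB0 X.1 h1 X.2 h2
    rw [norm_iteratedFDeriv_zero] at h3
    have h4 := fun j : Fin 3 => (norm_le_pi_norm (w X.1 X.2) j).trans (h3.trans (le_abs_self B0))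
    exact ⟨h4 0, h4 1⟩
  have heq : ∀ X : EE, X.1 ∈ Set.Ioo 0 T → X.2.2 < 0 →
      Dd eT r X + (W 0 X * Dd e1 r X + W 1 X * Dd e2 r X + W 2 X * Dd eZ r X)
        = ε * Dd eZ (Dd eZ r) X + H X := by
    rintro ⟨s, x⟩ h1 h2
    have h := hpde s h1 x h2
    rw [deriv_bridge hρ, fderiv_bridge hρ, fderiv_bridge hρ] at h
    have e1 : dzD (ρ s) x = Dd eZ r (s, x) := by rw [dzD_bridge hρ]
    have e2 : dzD (dzD (ρ s)) x = Dd eZ (Dd eZ r) (s, x) := dzD_fderiv_bridge hρ s x _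
    rw [e1, e2] at h
    exact h
  have htop0 : ∀ s ∈ Set.Icc 0 T, ∀ y, r (s, (y, 0)) = 0 := fun s hs y => hbc s hs y
  have hbot0 : ∀ u : (Fin 2 → ℝ) × ℝ, ∀ s ∈ Set.Icc 0 T, ∀ y, ∀ z < -K,
      r (s, (y, z)) = 0 ∧ Dd (0, u) r (s, (y, z)) = 0 := by
    intro u s hs y z hz
    refine ⟨(hvan s hs (y, z) hz.le).1, ?_⟩
    rw [← fderiv_bridge hρ]
    have : ρ s =ᶠ[nhds (y, z)] fun _ => 0 := by
      have ho : {x : (Fin 2 → ℝ) × ℝ | x.2 < -K} ∈ nhds (y, z) :=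
        (isOpen_lt continuous_snd continuous_const).mem_nhds hz
      filter_upwards [ho] with x hx
      exact (hvan s hs x (le_of_lt hx)).1
    rw [this.fderiv_eq]
    simp
  set Wn : ℝ → ℝ≥0∞ := fun s => wE2inf w s + supNormS (dzD (dzD (fun x => w s x 2))) with hWn
  set Rn : ℝ → ℝ≥0∞ := fun s => conormInf 1 (ρ s) + conormL2 4 (ρ s) with hRn
  set Hn : ℝ → ℝ≥0∞ := fun s => conormInf 1 (𝓗 s) with hHn
  have hWf : ∀ s ∈ Set.Icc 0 T, Wn s ≠ ⊤ := fun s hs =>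
    ENNReal.add_ne_top.2 ⟨(hfin s hs).2.2.1, (hfin s hs).2.2.2.1⟩
  have hRf : ∀ s ∈ Set.Icc 0 T, Rn s ≠ ⊤ := fun s hs =>
    ENNReal.add_ne_top.2 ⟨(hfin s hs).2.2.2.2.1, (hfin s hs).2.2.2.2.2.1⟩
  have hHf : ∀ s ∈ Set.Icc 0 T, Hn s ≠ ⊤ := fun s hs => (hfin s hs).2.2.2.2.2.2
  -- pointwise bounds
  have bR1 : ∀ s ∈ Set.Icc 0 T, ∀ x : (Fin 2 → ℝ) × ℝ, x.2 < 0 →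
      |Dd e1 r (s, x)| ≤ (Rn s).toReal ∧ |Dd e2 r (s, x)| ≤ (Rn s).toReal ∧
      |x.2 / (1 - x.2) * Dd eZ r (s, x)| ≤ (Rn s).toReal := by
    intro s hs x hx
    have h := fun i => abs_le_of_supNormS
      ((supNormS_Zop_le_conormInf 1 le_rfl i (ρ s)).trans (le_self_add : _ ≤ Rn s)) (hRf s hs) hx
    have h0 := h 0
    have h1 := h 1
    have h2 := h 2
    rw [Zop0, fderiv_bridge hρ] at h0
    rw [Zop1, fderiv_bridge hρ] at h1
    rw [Zop2, dzD_bridge hρ] at h2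
    exact ⟨h0, h1, h2⟩
  have bH : ∀ s ∈ Set.Icc 0 T, ∀ x : (Fin 2 → ℝ) × ℝ, x.2 < 0 →
      |H (s, x)| ≤ (Hn s).toReal ∧
      |Dd e1 H (s, x)| ≤ (Hn s).toReal ∧ |Dd e2 H (s, x)| ≤ (Hn s).toReal ∧
      |x.2 / (1 - x.2) * Dd eZ H (s, x)| ≤ (Hn s).toReal := by
    intro s hs x hx
    have h := fun i => abs_le_of_supNormS
      (supNormS_Zop_le_conormInf 1 le_rfl i (𝓗 s)) (hHf s hs) hx
    have h0 := h 0
    have h1 := h 1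
    have h2 := h 2
    rw [Zop0, fderiv_bridge hH] at h0
    rw [Zop1, fderiv_bridge hH] at h1
    rw [Zop2, dzD_bridge hH] at h2
    exact ⟨abs_le_of_supNormS (supNormS_le_conormInf 1 (𝓗 s)) (hHf s hs) hx, h0, h1, h2⟩
  have bW : ∀ s ∈ Set.Icc 0 T, ∀ x : (Fin 2 → ℝ) × ℝ, x.2 < 0 → ∀ j : Fin 3,
      |Dd e1 (W j) (s, x)| ≤ (Wn s).toReal ∧ |Dd e2 (W j) (s, x)| ≤ (Wn s).toReal ∧
      |Dd eZ (W j) (s, x)| ≤ (Wn s).toReal ∧ |Dd e1 (Dd eZ (W j)) (s, x)| ≤ (Wn s).toReal ∧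
      |Dd e2 (Dd eZ (W j)) (s, x)| ≤ (Wn s).toReal := by
    intro s hs x hx j
    have hb := hwj j
    have k1 := abs_le_of_supNormS ((wE_Zop w s 0 j).trans (le_self_add : _ ≤ Wn s)) (hWf s hs) hx
    have k2 := abs_le_of_supNormS ((wE_Zop w s 1 j).trans (le_self_add : _ ≤ Wn s)) (hWf s hs) hx
    have k3 := abs_le_of_supNormS ((wE_dz w s j).trans (le_self_add : _ ≤ Wn s)) (hWf s hs) hx
    have k4 := abs_le_of_supNormS ((wE_Zdz w s 0 j).trans (le_self_add : _ ≤ Wn s)) (hWf s hs) hx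
    have k5 := abs_le_of_supNormS ((wE_Zdz w s 1 j).trans (le_self_add : _ ≤ Wn s)) (hWf s hs) hx
    rw [Zop0, fderiv_bridge (f := fun s x => w s x j) hb] at k1
    rw [Zop1, fderiv_bridge (f := fun s x => w s x j) hb] at k2
    rw [dzD_bridge (f := fun s x => w s x j) hb] at k3
    rw [Zop0, dzD_fderiv_bridge (f := fun s x => w s x j) hb] at k4
    rw [Zop1, dzD_fderiv_bridge (f := fun s x => w s x j) hb] at k5
    exact ⟨k1, k2, k3, k4, k5⟩
  have hw3z : ∀ s ∈ Set.Icc 0 T, ∀ x : (Fin 2 → ℝ) × ℝ, x.2 < 0 →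
      |W 2 (s, x)| ≤ (Wn s).toReal * (-x.2) ∧ |Dd e1 (W 2) (s, x)| ≤ (Wn s).toReal * (-x.2) ∧
      |Dd e2 (W 2) (s, x)| ≤ (Wn s).toReal * (-x.2) := by
    rintro s hs ⟨y, z⟩ hz
    refine ⟨?_, ?_, ?_⟩
    · exact mvt_z (hwj 2) (hw0 s hs y) (fun z' hz' => (bW s hs (y, z') hz' 2).2.2.1) hz
    · refine mvt_z (Dd_smooth (hwj 2) e1)
        (tangential_zero (hwj 2) rfl rfl (fun y => hw0 s hs y) y) (fun z' hz' => ?_) hz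
      rw [Dd_comm (hwj 2)]
      exact (bW s hs (y, z') hz' 2).2.2.2.1
    · refine mvt_z (Dd_smooth (hwj 2) e2)
        (tangential_zero (hwj 2) rfl rfl (fun y => hw0 s hs y) y) (fun z' hz' => ?_) hz
      rw [Dd_comm (hwj 2)]
      exact (bW s hs (y, z') hz' 2).2.2.2.2
  have hconv : ∀ s ∈ Set.Icc 0 T, ∀ a : ℝ,
      a ≤ 10 * ((Wn s).toReal * (Rn s).toReal + (Hn s).toReal) →
      ENNReal.ofReal a ≤ ENNReal.ofReal 10 * (Wn s * Rn s + Hn s) := by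
    intro s hs a ha
    have hf : Wn s * Rn s + Hn s ≠ ⊤ :=
      ENNReal.add_ne_top.2 ⟨ENNReal.mul_ne_top (hWf s hs) (hRf s hs), hHf s hs⟩
    have e : (Wn s).toReal * (Rn s).toReal + (Hn s).toReal = (Wn s * Rn s + Hn s).toReal := by
      rw [ENNReal.toReal_add (ENNReal.mul_ne_top (hWf s hs) (hRf s hs)) (hHf s hs),
        ENNReal.toReal_mul]
    rw [e] at ha
    calc ENNReal.ofReal a ≤ ENNReal.ofReal (10 * (Wn s * Rn s + Hn s).toReal) :=
          ENNReal.ofReal_le_ofReal ha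
      _ = _ := by rw [ENNReal.ofReal_mul (by norm_num), ENNReal.ofReal_toReal hf]
  have h0T : (0:ℝ) ∈ Set.Icc 0 T := ⟨le_rfl, hT.le⟩
  have hmain : ∀ (i : Fin 3) (u : (Fin 2 → ℝ) × ℝ) (c c1 c2 : ℝ → ℝ),
      (∀ s x, x.2 < 0 → Zop i (ρ s) x = c x.2 * Dd (0, u) r (s, x)) →
      ContinuousOn c (Set.Iic 0) → ContinuousOn c1 (Set.Iic 0) →
      (∀ z < 0, HasDerivAt c (c1 z) z) → (∀ z < 0, HasDerivAt c1 (c2 z) z) →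
      (∀ s ∈ Set.Icc 0 T, ∀ y, c 0 * Dd (0, u) r (s, (y, 0)) = 0) →
      (∀ X : EE, X.2.2 < 0 → 0 ≤ (c X.2.2 * c2 X.2.2 - 3 * c1 X.2.2 ^ 2) * Dd (0, u) r X ^ 2
        + 6 * Dd eZ r X ^ 2) →
      (∀ s ∈ Set.Icc 0 T, ∀ x : (Fin 2 → ℝ) × ℝ, x.2 < 0 →
        Gf r H (W 0) (W 1) (W 2) (0, u) c c1 (s, x)
          ≤ 10 * ((Wn s).toReal * (Rn s).toReal + (Hn s).toReal)) →
      ∀ t ∈ Set.Icc 0 T, supNormS (Zop i (ρ t)) ≤ ENNReal.ofReal 10 *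
        (supNormS (Zop i (ρ 0)) + supNormS (ρ 0) + ∫⁻ s in Set.Icc 0 t, (Wn s * Rn s + Hn s)) := by
    intro i u c c1 c2 hZ hcc hcc1 hc1 hc2 htop hq hG t ht
    have hf1 := (hfin 0 h0T).1 i
    have hf2 := (hfin 0 h0T).2.1
    set m := (supNormS (Zop i (ρ 0))).toReal + 3 * (supNormS (ρ 0)).toReal with hm
    have hm0 : 0 ≤ m := by positivity
    have hinit : ∀ x : (Fin 2 → ℝ) × ℝ, x.2 < 0 →
        (c x.2 * Dd (0, u) r (0, x)) ^ 2 + 6 * r (0, x) ^ 2 ≤ m ^ 2 := by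
      intro x hx
      have k1 := abs_le_of_supNormS (le_refl (supNormS (Zop i (ρ 0)))) hf1 hx
      have k2 : |r (0, x)| ≤ _ := abs_le_of_supNormS (le_refl (supNormS (ρ 0))) hf2 hx
      rw [hZ 0 x hx] at k1
      rw [← sq_abs (c x.2 * Dd (0, u) r (0, x)), ← sq_abs (r (0, x)), hm]
      set A := |c x.2 * Dd (0, u) r (0, x)|
      set A' := |r (0, x)|
      have p1 : 0 ≤ A := abs_nonneg _
      have p2 : 0 ≤ A' := abs_nonneg _
      calc A ^ 2 + 6 * A' ^ 2 ≤ (A + 3 * A') ^ 2 := by nlinarith [mul_nonneg p1 p2]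
        _ ≤ _ := by gcongr
    have hfinal := fun x hx => core2 (I := fun s => Wn s * Rn s + Hn s) (ENNReal.ofReal_ne_top (r := 10))
      hε (abs_nonneg B0) hm0 hρ hH (hwj 0) (hwj 1) (hwj 2) heq hcc hcc1 hc1 hc2 hBb
      (fun s hs y => ⟨htop0 s hs y, htop s hs y⟩) (hbot0 u) hinit hq
      (fun s hs x hx => hconv s hs _ (hG s hs x hx)) x hx t ht
    have hmle : ENNReal.ofReal m ≤ ENNReal.ofReal 10 * (supNormS (Zop i (ρ 0)) + supNormS (ρ 0)) := by
      have hf : supNormS (Zop i (ρ 0)) + supNormS (ρ 0) ≠ ⊤ := ENNReal.add_ne_top.2 ⟨hf1, hf2⟩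
      rw [← ENNReal.ofReal_toReal hf, ← ENNReal.ofReal_mul (by norm_num),
        ENNReal.toReal_add hf1 hf2]
      apply ENNReal.ofReal_le_ofReal
      rw [hm]
      have : 0 ≤ (supNormS (Zop i (ρ 0))).toReal := ENNReal.toReal_nonneg
      have : 0 ≤ (supNormS (ρ 0)).toReal := ENNReal.toReal_nonneg
      linarith
    refine iSup₂_le fun x hx => ?_
    rw [mul_add]
    refine le_trans ?_ (add_le_add_left hmle _)
    refine le_trans (le_of_eq ?_) (hfinal x hx)
    rw [hZ t x hx, ← Real.norm_eq_abs, ofReal_norm_eq_enorm]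
    rfl
  have hRn0 : ∀ s, 0 ≤ (Rn s).toReal := fun s => ENNReal.toReal_nonneg
  have hWn0 : ∀ s, 0 ≤ (Wn s).toReal := fun s => ENNReal.toReal_nonneg
  intro i
  have hi : i = 0 ∨ i = 1 ∨ i = 2 := by fin_cases i <;> simp
  rcases hi with rfl | rfl | rfl
  · refine hmain 0 (Pi.single 0 1, 0) (fun _ => 1) (fun _ => 0) (fun _ => 0) ?_ continuousOn_const
      continuousOn_const (fun z _ => hasDerivAt_const z 1) (fun z _ => hasDerivAt_const z 0) ?_ ?_ ?_
    · intro s x _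
      rw [Zop0, fderiv_bridge hρ, one_mul]
    · intro s hs y
      rw [tangential_zero hρ rfl rfl (fun y => htop0 s hs y) y, mul_zero]
    · intro X _
      simp only [mul_zero]
      nlinarith [sq_nonneg (Dd eZ r X)]
    · intro s hs x hx
      obtain ⟨a1, a2, a3⟩ := bR1 s hs x hx
      obtain ⟨b0, b1, b2, b3⟩ := bH s hs x hx
      exact bound_tan hx (hWn0 s) (hRn0 s) b1 b0 (bW s hs x hx 0).1 (bW s hs x hx 1).1
        (bW s hs x hx 2).1 (hw3z s hs x hx).2.1 a1 a2 a3 _ _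
  · refine hmain 1 (Pi.single 1 1, 0) (fun _ => 1) (fun _ => 0) (fun _ => 0) ?_ continuousOn_const
      continuousOn_const (fun z _ => hasDerivAt_const z 1) (fun z _ => hasDerivAt_const z 0) ?_ ?_ ?_
    · intro s x _
      rw [Zop1, fderiv_bridge hρ, one_mul]
    · intro s hs y
      rw [tangential_zero hρ rfl rfl (fun y => htop0 s hs y) y, mul_zero]
    · intro X _
      simp only [mul_zero]
      nlinarith [sq_nonneg (Dd eZ r X)]
    · intro s hs x hx
      obtain ⟨a1, a2, a3⟩ := bR1 s hs x hx
      obtain ⟨b0, b1, b2, b3⟩ := bH s hs x hx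
      exact bound_tan hx (hWn0 s) (hRn0 s) b2 b0 (bW s hs x hx 0).2.1 (bW s hs x hx 1).2.1
        (bW s hs x hx 2).2.1 (hw3z s hs x hx).2.2 a1 a2 a3 _ _
  · refine hmain 2 (0, 1) (fun z => z / (1 - z)) (fun z => 1 / (1 - z) ^ 2)
      (fun z => 2 / (1 - z) ^ 3) ?_ ?_ ?_ ?_ ?_ ?_ ?_ ?_
    · intro s x _
      rw [Zop2, dzD_bridge hρ]; rfl
    · refine ContinuousOn.div (by fun_prop) (by fun_prop) ?_
      intro z hz
      have : z ≤ 0 := hz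
      linarith
    · refine ContinuousOn.div (by fun_prop) (by fun_prop) ?_
      intro z hz
      have : z ≤ 0 := hz
      have : 0 < 1 - z := by linarith
      positivity
    · intro z hz
      have hp : 1 - z ≠ 0 := by linarith
      refine ((hasDerivAt_id z).div ((hasDerivAt_id z).const_sub 1) hp).congr_deriv ?_
      simp
    · intro z hz
      have hp : 1 - z ≠ 0 := by linarith
      refine ((hasDerivAt_const z (1:ℝ)).div (((hasDerivAt_id z).const_sub 1).pow 2)
        (pow_ne_zero 2 hp)).congr_deriv ?_
      simp
      field_simp
    · intro s hs y
      simp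
    · rintro ⟨s, y, z⟩ hz
      simp only at hz ⊢
      have hp : 0 < 1 - z := by linarith
      have hi0 : 0 < 1 / (1 - z) := by positivity
      have hi1 : 1 / (1 - z) ≤ 1 := by rw [div_le_one hp]; linarith
      have e : z / (1 - z) * (2 / (1 - z) ^ 3) - 3 * (1 / (1 - z) ^ 2) ^ 2
          = -2 * (1 / (1 - z)) ^ 3 - (1 / (1 - z)) ^ 4 := by
        field_simp; ring
      rw [e]
      have k3 : (1 / (1 - z)) ^ 3 ≤ 1 := pow_le_one₀ hi0.le hi1
      have k4 : (1 / (1 - z)) ^ 4 ≤ 1 := pow_le_one₀ hi0.le hi1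
      have : Dd (0, (0, 1)) r (s, (y, z)) = Dd eZ r (s, (y, z)) := rfl
      rw [this]
      nlinarith [sq_nonneg (Dd eZ r (s, (y, z)))]
    · intro s hs x hx
      obtain ⟨a1, a2, a3⟩ := bR1 s hs x hx
      obtain ⟨b0, b1, b2, b3⟩ := bH s hs x hx
      exact bound_nor hx (hWn0 s) (hRn0 s) b3 b0 (bW s hs x hx 0).2.2.1 (bW s hs x hx 1).2.2.1
        (bW s hs x hx 2).2.2.1 (hw3z s hs x hx).1 a1 a2 a3
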